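/- Let n ≥ 2, let Ω ⊆ ℂ be open, and let φ₁,…,φₙ be smooth real-valued functions on Ω with φ₁+⋯+φₙ = 0. Set H = diag(e^{φ₁},…,e^{φₙ}), θ = ℰ₊, and let θ* = H⁻¹θ†H be the H-adjoint of θ, where † is conjugate transpose. Then: (i) θ* = Σ_{i=1}^{n−1} e^{φᵢ−φᵢ₊₁} E_{i+1,i}; (ii) with B_z = ∂Φ + θ and B_{z̄} = θ*, the curvature satisfies ∂B_{z̄} − ∂̄B_z + [B_z, B_{z̄}] = −∂∂̄Φ + [θ, θ*]; (iii) the connection d + B_z dz + B_{z̄} dz̄ is flat if and only if Hitchin's equation F_H + [θ,θ*] = 0 holds, where F_H = −∂∂̄Φ is the curvature of the Chern connection of H, if and only if φ₁,…,φₙ satisfy the A_{n−1} Toda equations. Thus any solution of the A_{n−1} Toda equations gives a solution of Hitchin's self-duality equation for the Higgs pair (H, θ). -/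

import Mathlib

open Complex Matrix

/-- Wirtinger derivative `∂f = ½(∂ₓf − i ∂_y f)`. -/
noncomputable def wd (f : ℂ → ℂ) (z : ℂ) : ℂ :=
  (1 / 2 : ℂ) * (fderiv ℝ f z 1 - Complex.I * fderiv ℝ f z Complex.I)

/-- Wirtinger derivative `∂̄f = ½(∂ₓf + i ∂_y f)`. -/
noncomputable def wdb (f : ℂ → ℂ) (z : ℂ) : ℂ :=
  (1 / 2 : ℂ) * (fderiv ℝ f z 1 + Complex.I * fderiv ℝ f z Complex.I)

/-- Entrywise Wirtinger derivative `∂A` of a matrix-valued function. -/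
noncomputable def mwd {n : ℕ} (A : ℂ → Matrix (Fin n) (Fin n) ℂ) (z : ℂ) :
    Matrix (Fin n) (Fin n) ℂ :=
  Matrix.of fun i j => wd (fun w => A w i j) z

/-- Entrywise Wirtinger derivative `∂̄A` of a matrix-valued function. -/
noncomputable def mwdb {n : ℕ} (A : ℂ → Matrix (Fin n) (Fin n) ℂ) (z : ℂ) :
    Matrix (Fin n) (Fin n) ℂ :=
  Matrix.of fun i j => wdb (fun w => A w i j) z

/-- The hermitean metric `H = diag(e^{φ₁},…,e^{φₙ})`. -/
noncomputable def Hm (n : ℕ) (φ : Fin n → ℂ → ℝ) (z : ℂ) : Matrix (Fin n) (Fin n) ℂ :=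
  Matrix.diagonal fun i => ((Real.exp (φ i z) : ℝ) : ℂ)

/-- The Higgs field `θ = ℰ₊ = Σ_{i=1}^{n−1} E_{i,i+1}`. -/
def thetaE (n : ℕ) : Matrix (Fin n) (Fin n) ℂ :=
  Matrix.of fun i j => if (j : ℕ) = (i : ℕ) + 1 then 1 else 0

/-- The `H`-adjoint `θ* = H⁻¹ θᴴ H` of the Higgs field. -/
noncomputable def thetaStar (n : ℕ) (φ : Fin n → ℂ → ℝ) (z : ℂ) : Matrix (Fin n) (Fin n) ℂ :=
  (Hm n φ z)⁻¹ * (thetaE n)ᴴ * Hm n φ z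

/-- The diagonal matrix `Φ = diag(φ₁,…,φₙ)` (with complex entries). -/
noncomputable def Phic (n : ℕ) (φ : Fin n → ℂ → ℝ) (z : ℂ) : Matrix (Fin n) (Fin n) ℂ :=
  Matrix.diagonal fun i => ((φ i z : ℝ) : ℂ)

/-- `B_z = ∂Φ + θ`. -/
noncomputable def Bz (n : ℕ) (φ : Fin n → ℂ → ℝ) (z : ℂ) : Matrix (Fin n) (Fin n) ℂ :=
  mwd (Phic n φ) z + thetaE n

/-- Right-hand side `e^{φᵢ−φᵢ₊₁} − e^{φᵢ₋₁−φᵢ}` of the `A_{n−1}` Toda equations. -/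
noncomputable def todaRHS (n : ℕ) (φ : Fin n → ℂ → ℝ) (i : Fin n) (z : ℂ) : ℂ :=
  (if h : (i : ℕ) + 1 < n then ((Real.exp (φ i z - φ ⟨(i : ℕ) + 1, h⟩ z) : ℝ) : ℂ) else 0) -
  (if 0 < (i : ℕ) then
      ((Real.exp (φ ⟨(i : ℕ) - 1, lt_of_le_of_lt (Nat.sub_le _ _) i.isLt⟩ z - φ i z) : ℝ) : ℂ)
    else 0)

/-!
Writing `H = e^Φ` with `Φ` diagonal, a constant matrix `A` satisfies
`∂(H⁻¹ A H) = [H⁻¹ A H, ∂Φ]`. For `A = θᴴ` this says that the term `∂θ*` of the curvature cancels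
`[∂Φ, θ*]`; since `∂̄∂Φ = ∂∂̄Φ`, what is left is `-∂∂̄Φ + [θ, θ*]`. Both summands are diagonal, and
`θ` being the shift, the diagonal of `[θ, θ*]` is the right-hand side of the Toda equations.
-/

section Wirtinger

variable {f g : ℂ → ℂ} {z : ℂ}

theorem wd_const (c z : ℂ) : wd (fun _ => c) z = 0 := by
  simp [wd]

theorem wdb_const (c z : ℂ) : wdb (fun _ => c) z = 0 := by
  simp [wdb]

theorem wdb_add_const (f : ℂ → ℂ) (c z : ℂ) : wdb (fun w => f w + c) z = wdb f z := by
  simp only [wdb, fderiv_add_const]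

theorem wd_sub (hf : DifferentiableAt ℝ f z) (hg : DifferentiableAt ℝ g z) :
    wd (fun w => f w - g w) z = wd f z - wd g z := by
  simp only [wd, fderiv_fun_sub hf hg, _root_.sub_apply]
  ring

theorem wd_const_mul (c : ℂ) (f : ℂ → ℂ) (z : ℂ) : wd (fun w => c * f w) z = c * wd f z := by
  have hderiv : fderiv ℝ (fun w => c * f w) z = c • fderiv ℝ f z :=
    congrFun (fderiv_const_smul_field c) z
  simp only [wd, hderiv, _root_.smul_apply, smul_eq_mul]
  ring

theorem wd_cexp (hf : DifferentiableAt ℝ f z) :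
    wd (fun w => exp (f w)) z = exp (f z) * wd f z := by
  simp only [wd, hf.hasFDerivAt.cexp.fderiv, _root_.smul_apply, smul_eq_mul]
  ring

theorem fderiv_fderiv_apply {𝕜 E F : Type*} [NontriviallyNormedField 𝕜] [NormedAddCommGroup E]
    [NormedSpace 𝕜 E] [NormedAddCommGroup F] [NormedSpace 𝕜 F] {f : E → F} {x : E}
    (hf : DifferentiableAt 𝕜 (fderiv 𝕜 f) x) (u v : E) :
    fderiv 𝕜 (fun y => fderiv 𝕜 f y v) x u = fderiv 𝕜 (fderiv 𝕜 f) x u v := by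
  simp [fderiv_clm_apply hf (differentiableAt_const v)]

theorem wdb_wd_comm (hf : ContDiffAt ℝ 2 f z) : wdb (wd f) z = wd (wdb f) z := by
  have hf' : DifferentiableAt ℝ (fderiv ℝ f) z :=
    (hf.fderiv_right (m := 1) (by norm_num)).differentiableAt one_ne_zero
  have hdir (v : ℂ) : DifferentiableAt ℝ (fun w => fderiv ℝ f w v) z :=
    hf'.clm_apply (differentiableAt_const v)
  have hsymm : fderiv ℝ (fderiv ℝ f) z 1 I = fderiv ℝ (fderiv ℝ f) z I 1 :=
    hf.isSymmSndFDerivAt (by simp) 1 I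
  have hwd (u : ℂ) : fderiv ℝ (wd f) z u =
      (1 / 2) * (fderiv ℝ (fderiv ℝ f) z u 1 - I * fderiv ℝ (fderiv ℝ f) z u I) := by
    unfold wd
    rw [fderiv_const_mul ((hdir 1).fun_sub ((hdir I).const_mul I)),
      fderiv_fun_sub (hdir 1) ((hdir I).const_mul I), fderiv_const_mul (hdir I)]
    simp [fderiv_fderiv_apply hf']
  have hwdb (u : ℂ) : fderiv ℝ (wdb f) z u =
      (1 / 2) * (fderiv ℝ (fderiv ℝ f) z u 1 + I * fderiv ℝ (fderiv ℝ f) z u I) := by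
    unfold wdb
    rw [fderiv_const_mul ((hdir 1).fun_add ((hdir I).const_mul I)),
      fderiv_fun_add (hdir 1) ((hdir I).const_mul I), fderiv_const_mul (hdir I)]
    simp [fderiv_fderiv_apply hf', mul_add]
  rw [wdb, wd, hwd, hwd, hwdb, hwdb, hsymm]
  ring

end Wirtinger

section MatrixWirtinger

variable {n : ℕ}

theorem mwd_diagonal (d : Fin n → ℂ → ℂ) (z : ℂ) :
    mwd (fun w => diagonal fun i => d i w) z = diagonal fun i => wd (d i) z := by
  ext i j
  obtain rfl | hij := eq_or_ne i j
  · simp [mwd]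
  · simp [mwd, hij, wd_const]

theorem mwdb_diagonal (d : Fin n → ℂ → ℂ) (z : ℂ) :
    mwdb (fun w => diagonal fun i => d i w) z = diagonal fun i => wdb (d i) z := by
  ext i j
  obtain rfl | hij := eq_or_ne i j
  · simp [mwdb]
  · simp [mwdb, hij, wdb_const]

theorem mwdb_add_const (A : ℂ → Matrix (Fin n) (Fin n) ℂ) (C : Matrix (Fin n) (Fin n) ℂ) (z : ℂ) :
    mwdb (fun w => A w + C) z = mwdb A z := by
  ext i j
  exact wdb_add_const (fun w => A w i j) (C i j) z

end MatrixWirtinger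

section Conjugation

variable {n : ℕ} {φ : Fin n → ℂ → ℝ}

theorem inv_Hm (φ : Fin n → ℂ → ℝ) (z : ℂ) :
    (Hm n φ z)⁻¹ = diagonal fun i => exp (-φ i z) := by
  refine inv_eq_left_inv ?_
  simp [Hm, diagonal_mul_diagonal, ← exp_add]

theorem inv_Hm_mul_mul_Hm_apply (φ : Fin n → ℂ → ℝ) (A : Matrix (Fin n) (Fin n) ℂ) (z : ℂ)
    (i j : Fin n) : ((Hm n φ z)⁻¹ * A * Hm n φ z) i j = A i j * exp (φ j z - φ i z) := by
  rw [inv_Hm, Hm, mul_diagonal, diagonal_mul, ofReal_exp, sub_eq_neg_add, exp_add]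
  ring

theorem mwd_inv_Hm_mul_mul_Hm {z : ℂ} (hφ : ∀ i, DifferentiableAt ℝ (φ i) z)
    (A : Matrix (Fin n) (Fin n) ℂ) :
    mwd (fun w => (Hm n φ w)⁻¹ * A * Hm n φ w) z =
      (Hm n φ z)⁻¹ * A * Hm n φ z * mwd (Phic n φ) z -
        mwd (Phic n φ) z * ((Hm n φ z)⁻¹ * A * Hm n φ z) := by
  have hd (i : Fin n) : DifferentiableAt ℝ (fun w => (φ i w : ℂ)) z :=
    ofRealCLM.differentiableAt.comp z (hφ i)
  ext i j
  have hentry : wd (fun w => A i j * exp (φ j w - φ i w)) z =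
      A i j * (exp (φ j z - φ i z) * (wd (fun w => φ j w) z - wd (fun w => φ i w) z)) := by
    rw [wd_const_mul, wd_cexp ((hd j).fun_sub (hd i)), wd_sub (hd j) (hd i)]
  have hPhi : mwd (Phic n φ) z = diagonal fun i => wd (fun w => φ i w) z := mwd_diagonal _ z
  rw [hPhi, Matrix.sub_apply, mul_diagonal, diagonal_mul]
  simp only [mwd, of_apply, inv_Hm_mul_mul_Hm_apply, hentry]
  ring

end Conjugation

section Shift

variable {n : ℕ}

theorem thetaE_mul_apply (M : Matrix (Fin n) (Fin n) ℂ) (i j : Fin n) :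
    (thetaE n * M) i j = if h : (i : ℕ) + 1 < n then M ⟨i + 1, h⟩ j else 0 := by
  simp only [mul_apply, thetaE, of_apply, ite_mul, one_mul, zero_mul]
  split_ifs with h
  · rw [Finset.sum_eq_single ⟨i + 1, h⟩ (by grind) (by simp), if_pos rfl]
  · exact Finset.sum_eq_zero fun k _ => if_neg (by omega)

theorem mul_thetaE_apply (M : Matrix (Fin n) (Fin n) ℂ) (i j : Fin n) :
    (M * thetaE n) i j = if 0 < (j : ℕ) then M i ⟨j - 1, by omega⟩ else 0 := by
  simp only [mul_apply, thetaE, of_apply, mul_ite, mul_one, mul_zero]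
  split_ifs with h
  · rw [Finset.sum_eq_single ⟨j - 1, by omega⟩ (by grind) (by simp), if_pos (by grind)]
  · exact Finset.sum_eq_zero fun k _ => if_neg (by omega)

end Shift

section Toda

variable {n : ℕ} {φ : Fin n → ℂ → ℝ}

theorem thetaStar_eq (φ : Fin n → ℂ → ℝ) (z : ℂ) :
    thetaStar n φ z = of fun (i j : Fin n) =>
      if (i : ℕ) = (j : ℕ) + 1 then ((Real.exp (φ j z - φ i z) : ℝ) : ℂ) else 0 := by
  ext i j
  rw [thetaStar, inv_Hm_mul_mul_Hm_apply]
  simp [thetaE, apply_ite star]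

theorem thetaE_thetaStar_commutator (φ : Fin n → ℂ → ℝ) (z : ℂ) :
    thetaE n * thetaStar n φ z - thetaStar n φ z * thetaE n =
      diagonal fun i => todaRHS n φ i z := by
  ext i j
  rw [Matrix.sub_apply, thetaE_mul_apply, mul_thetaE_apply, thetaStar_eq]
  obtain rfl | hij := eq_or_ne i j
  · rw [diagonal_apply_eq, todaRHS]
    grind [of_apply]
  · rw [diagonal_apply_ne _ hij]
    grind [of_apply]

theorem mwd_mwdb_Phic (φ : Fin n → ℂ → ℝ) (z : ℂ) :
    mwd (mwdb (Phic n φ)) z = diagonal fun i => wd (wdb fun w => φ i w) z := by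
  have hPhi : mwdb (Phic n φ) = fun w => diagonal fun i => wdb (fun v => φ i v) w :=
    funext (mwdb_diagonal _)
  rw [hPhi, mwd_diagonal]

theorem mwdb_Bz {z : ℂ} (hφ : ∀ i, ContDiffAt ℝ 2 (φ i) z) :
    mwdb (Bz n φ) z = mwd (mwdb (Phic n φ)) z := by
  have hBz : Bz n φ = fun w => (diagonal fun i => wd (fun v => φ i v) w) + thetaE n :=
    funext fun w => congrArg (· + thetaE n) (mwd_diagonal _ w)
  rw [hBz, mwdb_add_const, mwdb_diagonal, mwd_mwdb_Phic]
  congr 1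
  funext i
  exact wdb_wd_comm (ofRealCLM.contDiff.contDiffAt.comp z (hφ i))

theorem curvature_eq {z : ℂ} (hφ : ∀ i, ContDiffAt ℝ 2 (φ i) z) :
    mwd (thetaStar n φ) z - mwdb (Bz n φ) z +
        (Bz n φ z * thetaStar n φ z - thetaStar n φ z * Bz n φ z) =
      -(mwd (mwdb (Phic n φ)) z) +
        (thetaE n * thetaStar n φ z - thetaStar n φ z * thetaE n) := by
  have hstar : mwd (thetaStar n φ) z =
      thetaStar n φ z * mwd (Phic n φ) z - mwd (Phic n φ) z * thetaStar n φ z :=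
    mwd_inv_Hm_mul_mul_Hm (fun i => (hφ i).differentiableAt two_ne_zero) (thetaE n)ᴴ
  rw [hstar, mwdb_Bz hφ, Bz]
  noncomm_ring

theorem hitchin_iff_toda (φ : Fin n → ℂ → ℝ) (z : ℂ) :
    -(mwd (mwdb (Phic n φ)) z) +
        (thetaE n * thetaStar n φ z - thetaStar n φ z * thetaE n) = 0 ↔
      ∀ i, wd (wdb fun w => φ i w) z = todaRHS n φ i z := by
  rw [thetaE_thetaStar_commutator, mwd_mwdb_Phic, neg_add_eq_zero, diagonal_eq_diagonal_iff]

end Toda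

theorem toda_gives_hitchin_general (n : ℕ) (Ω : Set ℂ) (hΩ : IsOpen Ω)
    (φ : Fin n → ℂ → ℝ) (hφ : ∀ i, ContDiffOn ℝ 2 (φ i) Ω) :
    (∀ z ∈ Ω,
        thetaStar n φ z =
          Matrix.of fun (i j : Fin n) =>
            if (i : ℕ) = (j : ℕ) + 1 then ((Real.exp (φ j z - φ i z) : ℝ) : ℂ) else 0) ∧
    (∀ z ∈ Ω,
        mwd (thetaStar n φ) z - mwdb (Bz n φ) z +
            (Bz n φ z * thetaStar n φ z - thetaStar n φ z * Bz n φ z) =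
          -(mwd (fun w => mwdb (Phic n φ) w) z) +
            (thetaE n * thetaStar n φ z - thetaStar n φ z * thetaE n)) ∧
    ((∀ z ∈ Ω,
        mwd (thetaStar n φ) z - mwdb (Bz n φ) z +
            (Bz n φ z * thetaStar n φ z - thetaStar n φ z * Bz n φ z) = 0) ↔
      (∀ z ∈ Ω,
        -(mwd (fun w => mwdb (Phic n φ) w) z) +
            (thetaE n * thetaStar n φ z - thetaStar n φ z * thetaE n) = 0)) ∧
    ((∀ z ∈ Ω,
        -(mwd (fun w => mwdb (Phic n φ) w) z) +
            (thetaE n * thetaStar n φ z - thetaStar n φ z * thetaE n) = 0) ↔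
      (∀ z ∈ Ω, ∀ i : Fin n,
        wd (fun w => wdb (fun v => ((φ i v : ℝ) : ℂ)) w) z = todaRHS n φ i z)) := by
  have hcurv (z : ℂ) (hz : z ∈ Ω) :=
    curvature_eq fun i => (hφ i).contDiffAt (hΩ.mem_nhds hz)
  exact ⟨fun z _ => thetaStar_eq φ z, hcurv, forall₂_congr fun z hz => by rw [hcurv z hz],
    forall₂_congr fun z _ => hitchin_iff_toda φ z⟩

/-- (i) `θ* = Σ e^{φᵢ−φᵢ₊₁} E_{i+1,i}`; (ii) the curvature of `d + B_z dz + B_{z̄} dz̄`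
with `B_{z̄} = θ*` equals `−∂∂̄Φ + [θ,θ*]`; (iii) the connection is flat iff Hitchin's
equation `F_H + [θ,θ*] = 0` holds (with `F_H = −∂∂̄Φ`) iff the Toda equations hold. -/
theorem toda_gives_hitchin (n : ℕ) (hn : 2 ≤ n) (Ω : Set ℂ) (hΩ : IsOpen Ω)
    (φ : Fin n → ℂ → ℝ) (hφ : ∀ i, ContDiffOn ℝ (⊤ : ℕ∞) (φ i) Ω)
    (hsum : ∀ z ∈ Ω, ∑ i, φ i z = 0) :
    (∀ z ∈ Ω,
        thetaStar n φ z =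
          Matrix.of fun (i j : Fin n) =>
            if (i : ℕ) = (j : ℕ) + 1 then ((Real.exp (φ j z - φ i z) : ℝ) : ℂ) else 0) ∧
    (∀ z ∈ Ω,
        mwd (thetaStar n φ) z - mwdb (Bz n φ) z +
            (Bz n φ z * thetaStar n φ z - thetaStar n φ z * Bz n φ z) =
          -(mwd (fun w => mwdb (Phic n φ) w) z) +
            (thetaE n * thetaStar n φ z - thetaStar n φ z * thetaE n)) ∧
    ((∀ z ∈ Ω,
        mwd (thetaStar n φ) z - mwdb (Bz n φ) z +
            (Bz n φ z * thetaStar n φ z - thetaStar n φ z * Bz n φ z) = 0) ↔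
      (∀ z ∈ Ω,
        -(mwd (fun w => mwdb (Phic n φ) w) z) +
            (thetaE n * thetaStar n φ z - thetaStar n φ z * thetaE n) = 0)) ∧
    ((∀ z ∈ Ω,
        -(mwd (fun w => mwdb (Phic n φ) w) z) +
            (thetaE n * thetaStar n φ z - thetaStar n φ z * thetaE n) = 0) ↔
      (∀ z ∈ Ω, ∀ i : Fin n,
        wd (fun w => wdb (fun v => ((φ i v : ℝ) : ℂ)) w) z = todaRHS n φ i z)) :=
  toda_gives_hitchin_general n Ω hΩ φ fun i => (hφ i).of_le (WithTop.coe_le_coe.2 le_top)
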